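/- Let C₁,...,Cₙ be pairwise-disjoint convex sets in ℝ², and let ρ ≥ 0. Then the sets Kᵢ* = Cᵢ ⊕ D(ρ) form a family of pseudo-disks: for any i ≠ j, the boundaries ∂Kᵢ* and ∂Kⱼ* intersect in at most two points (assuming general position). -/

import Mathlib

open Pointwise

namespace KLPS

abbrev E2 := EuclideanSpace ℝ (Fin 2)

/-- support function -/
noncomputable def supp (A : Set E2) (u : E2) : ℝ := sSup ((fun x : E2 => inner ℝ x u) '' A)

lemma cont_inner (u : E2) : Continuous (fun x : E2 => (inner ℝ x u : ℝ)) := by fun_prop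

lemma le_supp {A : Set E2} (hA : IsCompact A) {x : E2} (hx : x ∈ A) (u : E2) :
    inner ℝ x u ≤ supp A u :=
  le_csSup (hA.image (cont_inner u)).bddAbove ⟨x, hx, rfl⟩

lemma exists_supp {A : Set E2} (hA : IsCompact A) (hne : A.Nonempty) (u : E2) :
    ∃ x ∈ A, inner ℝ x u = supp A u := by
  obtain ⟨x, hx, h⟩ := hA.exists_sSup_image_eq hne (cont_inner u).continuousOn
  exact ⟨x, hx, h.symm⟩

lemma supp_eq {A : Set E2} (hA : IsCompact A) {p u : E2} (hp : p ∈ A)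
    (h : ∀ x ∈ A, (inner ℝ x u : ℝ) ≤ inner ℝ p u) : supp A u = inner ℝ p u := by
  obtain ⟨x, hx, hxu⟩ := exists_supp hA ⟨p, hp⟩ u
  exact le_antisymm (hxu ▸ h x hx) (le_supp hA hp u)

lemma supp_add {A B : Set E2} (hA : IsCompact A) (hB : IsCompact B) (hAn : A.Nonempty)
    (hBn : B.Nonempty) (u : E2) : supp (A + B) u = supp A u + supp B u := by
  obtain ⟨a, ha, hau⟩ := exists_supp hA hAn u
  obtain ⟨b, hb, hbu⟩ := exists_supp hB hBn u
  rw [supp_eq (hA.add hB) (Set.add_mem_add ha hb), inner_add_left, hau, hbu]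
  rintro _ ⟨x, hx, y, hy, rfl⟩
  simp only [inner_add_left, hau, hbu]
  exact add_le_add (le_supp hA hx u) (le_supp hB hy u)

lemma supp_smul {A : Set E2} (hA : IsCompact A) (hne : A.Nonempty) {c : ℝ} (hc : 0 ≤ c) (u : E2) :
    supp A (c • u) = c * supp A u := by
  obtain ⟨a, ha, hau⟩ := exists_supp hA hne u
  rw [supp_eq hA ha, inner_smul_right, hau]
  intro x hx
  rw [inner_smul_right, inner_smul_right, hau]
  exact mul_le_mul_of_nonneg_left (le_supp hA hx u) hc

lemma supp_cont {A : Set E2} (hA : IsCompact A) : Continuous (supp A) := by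
  unfold supp
  exact hA.continuous_sSup (f := fun u x : E2 => (inner ℝ x u : ℝ)) (by
    show Continuous (fun q : E2 × E2 => (inner ℝ q.2 q.1 : ℝ)); fun_prop)

/-- strict monotonicity of the support difference in the separating direction -/
lemma mono {A B : Set E2} (hA : IsCompact A) (hAn : A.Nonempty) (hB : IsCompact B)
    (hBn : B.Nonempty) {w : E2} (hw : ∀ a ∈ A, ∀ b ∈ B, (inner ℝ b w : ℝ) < inner ℝ a w)
    (z : E2) {s : ℝ} (hs : 0 < s) :
    supp A z - supp B z < supp A (z + s • w) - supp B (z + s • w) := by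
  obtain ⟨a, ha, hau⟩ := exists_supp hA hAn z
  obtain ⟨b, hb, hbu⟩ := exists_supp hB hBn (z + s • w)
  have h1 := le_supp hA ha (z + s • w)
  have h2 := le_supp hB hb z
  rw [inner_add_right, inner_smul_right] at h1 hbu
  have := mul_lt_mul_of_pos_left (hw a ha b hb) hs
  linarith

lemma not_mem_interior {K : Set E2} {x u : E2} (hu : u ≠ 0)
    (h : ∀ y ∈ K, (inner ℝ y u : ℝ) ≤ inner ℝ x u) : x ∉ interior K := by
  intro hx
  have hc : ContinuousAt (fun t : ℝ => x + t • u) 0 := by fun_prop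
  have h1 : ∀ᶠ t in nhds (0:ℝ), x + t • u ∈ K :=
    hc.eventually (by simpa using mem_interior_iff_mem_nhds.mp hx)
  obtain ⟨ε, hε, hb⟩ := Metric.eventually_nhds_iff.mp h1
  have h2 := h _ (hb (y := ε / 2) (by rw [Real.dist_eq, sub_zero, abs_of_pos] <;> linarith))
  rw [inner_add_left, inner_smul_left] at h2
  have : 0 < (inner ℝ u u : ℝ) := real_inner_self_pos.mpr hu
  have h3 : 0 < ε / 2 * (inner ℝ u u : ℝ) := by positivity
  simp at h2 h3
  linarith

lemma seg_frontier {K : Set E2} (hK : IsCompact K) (hc : Convex ℝ K) {p q u : E2} (hu : u ≠ 0)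
    (hp : p ∈ K) (hq : q ∈ K) (h : ∀ y ∈ K, (inner ℝ y u : ℝ) ≤ inner ℝ p u)
    (hpq : (inner ℝ q u : ℝ) = inner ℝ p u) : segment ℝ p q ⊆ frontier K := by
  intro x hx
  rw [hK.isClosed.frontier_eq]
  refine ⟨hc.segment_subset hp hq hx, not_mem_interior hu ?_⟩
  obtain ⟨a, b, ha, hb, hab, rfl⟩ := hx
  intro y hy
  rw [inner_add_left, inner_smul_left, inner_smul_left, hpq]
  have := h y hy
  simp only [conj_trivial]
  rw [← add_mul, hab, one_mul]
  exact this

lemma seg_infinite {p q : E2} (h : p ≠ q) : (segment ℝ p q).Infinite := by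
  rw [segment_eq_image_lineMap]
  exact (Set.Icc_infinite zero_lt_one).image (AffineMap.lineMap_injective ℝ h).injOn

lemma exists_normal {K : Set E2} (hK : IsCompact K) (hc : Convex ℝ K) (hi : (interior K).Nonempty)
    {p : E2} (hp : p ∈ frontier K) :
    ∃ u : E2, u ≠ 0 ∧ ∀ y ∈ K, (inner ℝ y u : ℝ) ≤ inner ℝ p u := by
  rw [hK.isClosed.frontier_eq] at hp
  obtain ⟨f, hf⟩ := geometric_hahn_banach_open_point hc.interior isOpen_interior hp.2
  have hfu : ∀ x, f x = inner ℝ x ((InnerProductSpace.toDual ℝ E2).symm f) := by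
    intro x
    rw [real_inner_comm, InnerProductSpace.toDual_symm_apply]
  refine ⟨(InnerProductSpace.toDual ℝ E2).symm f, ?_, ?_⟩
  · intro h0
    obtain ⟨x, hx⟩ := hi
    have := hf x hx
    rw [hfu, hfu, h0] at this
    simp at this
  · intro y hy
    rw [← hfu, ← hfu]
    have hy' : y ∈ closure (interior K) := by
      rw [hc.closure_interior_eq_closure_of_nonempty_interior hi]; exact subset_closure hy
    have : IsClosed {y | f y ≤ f p} := isClosed_le f.continuous continuous_const
    exact closure_minimal (fun x hx => (hf x hx).le) this hy'

/-- A coordinate transversal to `w`. -/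
def cr (w z : E2) : ℝ := z 0 * w 1 - z 1 * w 0

lemma cr_smul (w z : E2) (c : ℝ) : cr w (c • z) = c * cr w z := by simp [cr]; ring
lemma cr_sub (w z z' : E2) : cr w (z - z') = cr w z - cr w z' := by simp [cr]; ring

lemma par {w z : E2} (hw : w ≠ 0) (h : cr w z = 0) : ∃ s : ℝ, z = s • w := by
  unfold cr at h
  by_cases h0 : w 0 = 0
  · have h1 : w 1 ≠ 0 := by
      intro h1; apply hw; ext i; fin_cases i <;> simp [h0, h1]
    refine ⟨z 1 / w 1, ?_⟩
    ext i; fin_cases i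
    · simp [h0] at h ⊢; tauto
    · simp; field_simp
  · refine ⟨z 0 / w 0, ?_⟩
    ext i; fin_cases i
    · simp; field_simp
    · simp; field_simp; linarith

lemma core {A B : Set E2} (hA : IsCompact A) (hAn : A.Nonempty) (hB : IsCompact B)
    (hBn : B.Nonempty) {w : E2} (hw : ∀ a ∈ A, ∀ b ∈ B, (inner ℝ b w : ℝ) < inner ℝ a w)
    {z z' : E2} (hz : supp A z = supp B z) (hz' : supp A z' = supp B z')
    (hs : 0 < cr w z * cr w z') : ∃ c : ℝ, 0 < c ∧ z' = c • z := by
  have hw0 : w ≠ 0 := by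
    rintro rfl
    obtain ⟨a, ha⟩ := hAn
    obtain ⟨b, hb⟩ := hBn
    simpa using hw a ha b hb
  have hx : cr w z ≠ 0 := by rintro h; simp [h] at hs
  set c := cr w z' / cr w z with hcdef
  have hc : 0 < c := by
    have : c = (cr w z * cr w z') / (cr w z)^2 := by rw [hcdef]; field_simp
    rw [this]; positivity
  refine ⟨c, hc, ?_⟩
  obtain ⟨s, hs⟩ := par (w := w) (z := z' - c • z) hw0 (by
    rw [cr_sub, cr_smul, hcdef]; field_simp; simp)
  have hz'2 : z' = c • z + s • w := by rw [← hs]; abel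
  have hcz : supp A (c • z) - supp B (c • z) = 0 := by
    rw [supp_smul hA hAn hc.le, supp_smul hB hBn hc.le, hz, sub_self]
  rcases lt_trichotomy s 0 with h | h | h
  · have := mono hA hAn hB hBn hw z' (neg_pos.mpr h)
    have e : z' + (-s) • w = c • z := by rw [hz'2, neg_smul]; abel
    rw [e] at this; linarith
  · rw [hz'2, h]; simp
  · have := mono hA hAn hB hBn hw (c • z) h
    rw [← hz'2] at this; linarith

lemma cr_ne {A B : Set E2} (hA : IsCompact A) (hAn : A.Nonempty) (hB : IsCompact B)
    (hBn : B.Nonempty) {w : E2} (hw : ∀ a ∈ A, ∀ b ∈ B, (inner ℝ b w : ℝ) < inner ℝ a w)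
    {z : E2} (hz : supp A z = supp B z) (hz0 : z ≠ 0) : cr w z ≠ 0 := by
  intro h
  have hw0 : w ≠ 0 := by
    rintro rfl
    obtain ⟨a, ha⟩ := hAn
    obtain ⟨b, hb⟩ := hBn
    simpa using hw a ha b hb
  have h0 : ∀ {X : Set E2}, IsCompact X → X.Nonempty → supp X 0 = 0 := by
    intro X hX hn
    have := supp_smul hX hn le_rfl 0
    simpa using this
  obtain ⟨s, rfl⟩ := par hw0 h
  rcases lt_trichotomy s 0 with h | h | h
  · have := mono hA hAn hB hBn hw (s • w) (neg_pos.mpr h)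
    rw [← add_smul, add_neg_cancel, zero_smul, h0 hA hAn, h0 hB hBn] at this; linarith
  · simp [h] at hz0
  · have := mono hA hAn hB hBn hw 0 h
    rw [zero_add, h0 hA hAn, h0 hB hBn] at this; linarith

/-- A normal direction in the cone at `p` where both support functions agree. -/
lemma exists_z {K L : Set E2} (hK : IsCompact K) (hKc : Convex ℝ K) (hKi : (interior K).Nonempty)
    (hL : IsCompact L) (hLc : Convex ℝ L) (hLi : (interior L).Nonempty)
    (hfin : (frontier K ∩ frontier L).Finite) {p : E2} (hp : p ∈ frontier K ∩ frontier L) :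
    ∃ z : E2, supp K z = supp L z ∧
      ∀ q ∈ frontier K ∩ frontier L, q ≠ p → (inner ℝ (q - p) z : ℝ) < 0 := by
  obtain ⟨u, hu0, hu⟩ := exists_normal hK hKc hKi hp.1
  obtain ⟨v, hv0, hv⟩ := exists_normal hL hLc hLi hp.2
  have hpK := hK.isClosed.frontier_subset hp.1
  have hpL := hL.isClosed.frontier_subset hp.2
  have contra : ∀ q ∈ K ∩ L, q ≠ p → ∀ u' v' : E2, u' ≠ 0 → v' ≠ 0 →
      (∀ y ∈ K, (inner ℝ y u' : ℝ) ≤ inner ℝ p u') → (∀ y ∈ L, (inner ℝ y v' : ℝ) ≤ inner ℝ p v') →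
      (inner ℝ q u' : ℝ) = inner ℝ p u' → (inner ℝ q v' : ℝ) = inner ℝ p v' → False := by
    intro q hq hqp u' v' hu' hv' h1 h2 h3 h4
    exact seg_infinite hqp.symm (hfin.subset (Set.subset_inter
      (seg_frontier hK hKc hu' hpK hq.1 h1 h3) (seg_frontier hL hLc hv' hpL hq.2 h2 h4)))
  let g : ℝ → ℝ := fun t => supp K ((1 - t) • u + t • v) - supp L ((1 - t) • u + t • v)
  have hg : Continuous g := by
    have h1 := supp_cont hK
    have h2 := supp_cont hL
    fun_prop
  have hg0 : g 0 ≤ 0 := by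
    have := le_supp hL hpL u
    simp only [g, sub_zero, one_smul, zero_smul, add_zero, supp_eq hK hpK hu]
    linarith
  have hg1 : 0 ≤ g 1 := by
    have := le_supp hK hpK v
    simp only [g, sub_self, one_smul, zero_smul, zero_add, supp_eq hL hpL hv]
    linarith
  obtain ⟨t, ⟨ht0, ht1⟩, ht⟩ := intermediate_value_Icc zero_le_one hg.continuousOn ⟨hg0, hg1⟩
  have hzeq := sub_eq_zero.mp ht
  refine ⟨(1 - t) • u + t • v, hzeq, ?_⟩
  intro q hq hqp
  have hqK := hK.isClosed.frontier_subset hq.1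
  have hqL := hL.isClosed.frontier_subset hq.2
  have hqu := hu q hqK
  have hqv := hv q hqL
  by_contra hneg
  push Not at hneg
  rw [inner_add_right, inner_smul_right, inner_smul_right, inner_sub_left, inner_sub_left] at hneg
  rcases ht0.eq_or_lt with h | h
  · subst h
    have e : (1 - (0:ℝ)) • u + (0:ℝ) • v = u := by simp
    rw [e] at hzeq
    have hL' : ∀ y ∈ L, (inner ℝ y u : ℝ) ≤ inner ℝ p u := fun y hy => by
      rw [← supp_eq hK hpK hu, hzeq]; exact le_supp hL hy u
    exact contra q ⟨hqK, hqL⟩ hqp u u hu0 hu0 hu hL' (by linarith) (by linarith)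
  rcases ht1.eq_or_lt with h' | h'
  · subst h'
    have e : (1 - (1:ℝ)) • u + (1:ℝ) • v = v := by simp
    rw [e] at hzeq
    have hK' : ∀ y ∈ K, (inner ℝ y v : ℝ) ≤ inner ℝ p v := fun y hy => by
      rw [← supp_eq hL hpL hv, ← hzeq]; exact le_supp hK hy v
    exact contra q ⟨hqK, hqL⟩ hqp v v hv0 hv0 hK' hv (by linarith) (by linarith)
  · refine contra q ⟨hqK, hqL⟩ hqp u v hu0 hv0 hu hv ?_ ?_
    · by_contra hne
      have := lt_of_le_of_ne hqu hne
      nlinarith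
    · by_contra hne
      have := lt_of_le_of_ne hqv hne
      nlinarith

lemma main {A B : Set E2} (hA : IsCompact A) (hAn : A.Nonempty) (hAc : Convex ℝ A)
    (hB : IsCompact B) (hBn : B.Nonempty) (hBc : Convex ℝ B) (hd : Disjoint A B)
    {ρ : ℝ} (hρ : 0 < ρ)
    (hfin : (frontier (A + Metric.closedBall (0 : E2) ρ) ∩
      frontier (B + Metric.closedBall (0 : E2) ρ)).Finite) :
    ∃ p q : E2, frontier (A + Metric.closedBall (0 : E2) ρ) ∩
      frontier (B + Metric.closedBall (0 : E2) ρ) ⊆ {p, q} := by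
  set D := Metric.closedBall (0 : E2) ρ with hD
  have hDc : IsCompact D := isCompact_closedBall _ _
  have hDn : D.Nonempty := ⟨0, by simp [hD, hρ.le]⟩
  have hint : ∀ X : Set E2, X.Nonempty → (interior (X + D)).Nonempty := by
    rintro X ⟨a, ha⟩
    have : Metric.ball a ρ ⊆ X + D := by
      intro y hy
      refine ⟨a, ha, y - a, ?_, by simp⟩
      simpa [hD, dist_eq_norm] using (Metric.mem_ball.mp hy).le
    exact ⟨a, interior_maximal this Metric.isOpen_ball (Metric.mem_ball_self hρ)⟩
  have hconvD : Convex ℝ D := convex_closedBall _ _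
  have hz := fun p hp => exists_z (hA.add hDc) (hAc.add hconvD) (hint A hAn) (hB.add hDc)
    (hBc.add hconvD) (hint B hBn) hfin (p := p) hp
  simp only [supp_add hA hDc hAn hDn, supp_add hB hDc hBn hDn, add_left_inj] at hz
  set S := frontier (A + D) ∩ frontier (B + D)
  obtain ⟨f, s, t, h1, hst, h2⟩ := geometric_hahn_banach_compact_closed hBc hB hAc hA.isClosed hd.symm
  obtain ⟨w, hw⟩ : ∃ w : E2, ∀ a ∈ A, ∀ b ∈ B, (inner ℝ b w : ℝ) < inner ℝ a w := by
    refine ⟨(InnerProductSpace.toDual ℝ E2).symm f, fun a ha b hb => ?_⟩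
    rw [real_inner_comm, InnerProductSpace.toDual_symm_apply, real_inner_comm,
      InnerProductSpace.toDual_symm_apply]
    linarith [h1 b hb, h2 a ha]
  have key : ∀ p ∈ S, ∀ q ∈ S, p ≠ q → ∀ z z' : E2, supp A z = supp B z → supp A z' = supp B z' →
      (inner ℝ (q - p) z : ℝ) < 0 → (inner ℝ (p - q) z' : ℝ) < 0 → ¬ 0 < cr w z * cr w z' := by
    intro p _ q _ _ z z' e e' i i' hpos
    obtain ⟨c, hc, rfl⟩ := core hA hAn hB hBn hw e e' hpos
    rw [inner_smul_right, ← neg_sub q p, inner_neg_left] at i'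
    nlinarith
  by_contra H
  push Not at H
  have H' : ∀ p q : E2, ∃ x ∈ S, x ≠ p ∧ x ≠ q := by
    intro p q
    obtain ⟨x, hx, hn⟩ := Set.not_subset.mp (H p q)
    exact ⟨x, hx, by simpa using hn⟩
  obtain ⟨p, hp, -, -⟩ := H' 0 0
  obtain ⟨q, hq, hqp, -⟩ := H' p p
  obtain ⟨r, hr, hrp, hrq⟩ := H' p q
  obtain ⟨x, hx, ix⟩ := hz p hp
  obtain ⟨y, hy, iy⟩ := hz q hq
  obtain ⟨z, hz, iz⟩ := hz r hr
  have nx := cr_ne hA hAn hB hBn hw hx (by rintro rfl; simpa using ix q hq hqp)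
  have ny := cr_ne hA hAn hB hBn hw hy (by rintro rfl; simpa using iy r hr hrq)
  have nz := cr_ne hA hAn hB hBn hw hz (by rintro rfl; simpa using iz q hq hrq.symm)
  have k1 := key p hp q hq hqp.symm x y hx hy (ix q hq hqp) (iy p hp hqp.symm)
  have k2 := key p hp r hr hrp.symm x z hx hz (ix r hr hrp) (iz p hp hrp.symm)
  have k3 := key q hq r hr hrq.symm y z hy hz (iy r hr hrq) (iz q hq hrq.symm)
  rcases lt_or_gt_of_ne nx with a | a <;> rcases lt_or_gt_of_ne ny with b | b <;>
    rcases lt_or_gt_of_ne nz with c | c <;>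
    first
    | exact k1 (mul_pos a b)
    | exact k2 (mul_pos a c)
    | exact k3 (mul_pos b c)
    | exact k1 (mul_pos_of_neg_of_neg a b)
    | exact k2 (mul_pos_of_neg_of_neg a c)
    | exact k3 (mul_pos_of_neg_of_neg b c)

end KLPS



/-- Kedem–Livne–Pach–Sharir: if `C₁,…,Cₙ` are pairwise-disjoint compact convex sets in the
plane and `ρ ≥ 0`, the Minkowski sums `Kᵢ* = Cᵢ ⊕ D(ρ)` form a family of pseudo-disks: for
`i ≠ j` (assuming general position, encoded as finiteness of the boundary intersection),
`∂Kᵢ* ∩ ∂Kⱼ*` consists of at most two points. -/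
theorem stmt_12 (n : ℕ) (C : Fin n → Set (EuclideanSpace ℝ (Fin 2))) (ρ : ℝ) (hρ : 0 ≤ ρ)
    (hconv : ∀ i, Convex ℝ (C i)) (hcomp : ∀ i, IsCompact (C i)) (hne : ∀ i, (C i).Nonempty)
    (hdisj : ∀ i j, i ≠ j → Disjoint (C i) (C j)) (i j : Fin n) (hij : i ≠ j)
    (hgen : (frontier (C i + Metric.closedBall (0 : EuclideanSpace ℝ (Fin 2)) ρ) ∩
        frontier (C j + Metric.closedBall (0 : EuclideanSpace ℝ (Fin 2)) ρ)).Finite) :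
    ∃ p q : EuclideanSpace ℝ (Fin 2),
      frontier (C i + Metric.closedBall (0 : EuclideanSpace ℝ (Fin 2)) ρ) ∩
          frontier (C j + Metric.closedBall (0 : EuclideanSpace ℝ (Fin 2)) ρ) ⊆
        {p, q} := by

  rcases hρ.eq_or_lt with h | h
  · subst h
    refine ⟨0, 0, ?_⟩
    rintro x ⟨h1, h2⟩
    simp only [Metric.closedBall_zero, Set.add_singleton, add_zero, Set.image_id'] at h1 h2
    exact absurd ((hcomp j).isClosed.frontier_subset h2)
      (Set.disjoint_left.mp (hdisj i j hij) ((hcomp i).isClosed.frontier_subset h1))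
  · exact KLPS.main (hcomp i) (hne i) (hconv i) (hcomp j) (hne j) (hconv j) (hdisj i j hij) h hgen
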